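/- arXiv:2006.00240 — 4 statements merged into one kernel-verified Lean document; each statement's English description precedes it below -/
import Mathlib

section
/- Let n ≥ 1, β ∈ (0,n), and let φ be a doubling Young function satisfying C_β := sup_{t>0} (t^β/φ(t)) ∫_0^t φ(s) s^{-β-1} ds < ∞. Suppose a domain Ω ⊂ ℝⁿ satisfies the imbedding: there exists C > 0 such that inf_{c∈ℝ} ‖u − c‖_{L^{φ^{n/(n−β)}}(Ω)} ≤ C ‖u‖_{Ẇ^{β,φ}(Ω)} for all u ∈ Ẇ^{β,φ}(Ω). Then Ω is Ahlfors n-regular. -/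
/-!
The proof tests the imbedding on Lipschitz cutoffs of balls. Write `B = B(x,r) ∩ Ω`, `m = |B|`,
and let `u` be the cutoff that is `1` on `B(x,s)`, `0` off `B(x,r)`, with `ρ = r - s`.

Since `|u(y) - u(z)| ≤ min(1, |y - z| / ρ)` and only pairs meeting `B` contribute
(`fracIntegral_cutoff`), polar coordinates and `C_β < ∞` bound the energy of `u` with parameter
`λ` by `2 m Q ρ^{-β} φ(1/λ)` (`lintegral_kernel`). With `λ` chosen so that this bound equals `1`,
the imbedding provides a constant `c` with `∫_Ω φ(|u - c| / (2Cλ))^{n/(n-β)} ≤ 1`. As `c` is at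
distance at least `1/2` from `0` or from `1`, and provided both `B(x,s) ∩ Ω` and `Ω \ B(x,r)` have
measure at least `m / 2`, doubling yields `ρ ≤ A m^{1/n}` (`radius_gap`).

Consequently, shrinking a radius `s` by `2 A |B(x,s) ∩ Ω|^{1/n}` halves the measure of the ball, and
summing the resulting geometric series gives `r ≤ A' |B(x,r) ∩ Ω|^{1/n}` whenever `Ω` has enough
mass outside `B(x,r)` (`shrink_iteration`, `radius_le_of_mass_outside`).

In the remaining case `B(x,r)` carries most of the mass of `Ω`, so `|Ω|` is finite. Of two disjoint
balls of radius `|y - z| / 2` around `y, z ∈ Ω`, one satisfies the mass condition, whence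
`diam Ω ≤ 2 A' |Ω|^{1/n}` (`dist_le_of_finite_volume`), and `r < 2 diam Ω` concludes.
-/

open MeasureTheory Metric Set Filter
open scoped ENNReal NNReal Topology Classical

noncomputable section

/-- `φ` is a Young function: convex, continuous on `[0,∞)`, `φ(0)=0`, `φ(t)>0` for `t>0`. -/
def IsYoung (φ : ℝ → ℝ) : Prop :=
  ContinuousOn φ (Set.Ici 0) ∧ ConvexOn ℝ (Set.Ici 0) φ ∧ φ 0 = 0 ∧ ∀ t > 0, 0 < φ t

/-- `φ` is doubling with constant `K > 1`: `φ(2t) ≤ K φ(t)` for all `t > 0`. -/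
def IsDoubling (φ : ℝ → ℝ) (K : ℝ) : Prop :=
  1 < K ∧ ∀ t > 0, φ (2 * t) ≤ K * φ t

/-- The (generalized) inverse of a Young function. -/
def yInv (φ : ℝ → ℝ) (y : ℝ) : ℝ :=
  sInf {t : ℝ | 0 ≤ t ∧ y ≤ φ t}

/-- `sup_{t>0} (t^β/φ(t)) ∫_0^t φ(s) s^{-β-1} ds ≤ M`. -/
def CbetaLE (β : ℝ) (φ : ℝ → ℝ) (M : ℝ) : Prop :=
  ∀ t > 0,
    ENNReal.ofReal (t ^ β / φ t) *
        (∫⁻ s in Set.Ioc (0 : ℝ) t, ENNReal.ofReal (φ s / s ^ (β + 1))) ≤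
      ENNReal.ofReal M

/-- The condition `C_β := sup_{t>0} (t^β/φ(t)) ∫_0^t φ(s) s^{-β-1} ds < ∞`. -/
def CbetaFinite (β : ℝ) (φ : ℝ → ℝ) : Prop :=
  ∃ M : ℝ, CbetaLE β φ M

/-- The double integral `∫_Ω ∫_Ω φ(|u(x)-u(y)|/λ) |x-y|^{-n-β} dx dy`. -/
def fracIntegral (n : ℕ) (β : ℝ) (φ : ℝ → ℝ) (Ω : Set (EuclideanSpace ℝ (Fin n)))
    (u : EuclideanSpace ℝ (Fin n) → ℝ) (lam : ℝ) : ℝ≥0∞ :=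
  ∫⁻ x in Ω, ∫⁻ y in Ω,
    ENNReal.ofReal (φ (|u x - u y| / lam) / dist x y ^ ((n : ℝ) + β))

/-- The fractional Orlicz–Sobolev (Luxemburg-type) seminorm `‖u‖_{Ẇ^{β,φ}(Ω)}`,
valued in `[0,∞]` (it is `∞` iff no admissible `λ` exists). -/
def fracNorm (n : ℕ) (β : ℝ) (φ : ℝ → ℝ) (Ω : Set (EuclideanSpace ℝ (Fin n)))
    (u : EuclideanSpace ℝ (Fin n) → ℝ) : ℝ≥0∞ :=
  sInf {lam : ℝ≥0∞ | 0 < lam ∧ lam ≠ ∞ ∧ fracIntegral n β φ Ω u lam.toReal ≤ 1}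

/-- `u ∈ Ẇ^{β,φ}(Ω)` : locally integrable on `Ω` with finite seminorm. -/
def MemW (n : ℕ) (β : ℝ) (φ : ℝ → ℝ) (Ω : Set (EuclideanSpace ℝ (Fin n)))
    (u : EuclideanSpace ℝ (Fin n) → ℝ) : Prop :=
  LocallyIntegrableOn u Ω ∧ fracNorm n β φ Ω u ≠ ∞

/-- The Orlicz (Luxemburg) norm `‖u‖_{L^ψ(Ω)}`, valued in `[0,∞]`. -/
def luxNorm (n : ℕ) (ψ : ℝ → ℝ) (Ω : Set (EuclideanSpace ℝ (Fin n)))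
    (u : EuclideanSpace ℝ (Fin n) → ℝ) : ℝ≥0∞ :=
  sInf {lam : ℝ≥0∞ | 0 < lam ∧ lam ≠ ∞ ∧
    (∫⁻ x in Ω, ENNReal.ofReal (ψ (|u x| / lam.toReal))) ≤ 1}

/-- `Ω` is Ahlfors `n`-regular: `|B(x,r) ∩ Ω| ≥ θ rⁿ` for all `x ∈ Ω`, `0 < r < 2 diam Ω`. -/
def AhlforsRegular (n : ℕ) (Ω : Set (EuclideanSpace ℝ (Fin n))) : Prop :=
  ∃ θ > (0 : ℝ), ∀ x ∈ Ω, ∀ r : ℝ, 0 < r → ENNReal.ofReal r < 2 * EMetric.diam Ω →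
    ENNReal.ofReal (θ * r ^ n) ≤ volume (Metric.ball x r ∩ Ω)

/-- `Ω` is a `Ẇ^{β,φ}`-extension domain: there are `C > 0` and a linear operator `E`
from `Ẇ^{β,φ}(Ω)` to `Ẇ^{β,φ}(ℝⁿ)` with `Eu = u` a.e. on `Ω` and
`‖Eu‖_{Ẇ^{β,φ}(ℝⁿ)} ≤ C ‖u‖_{Ẇ^{β,φ}(Ω)}`. -/
def IsExtensionDomain (n : ℕ) (β : ℝ) (φ : ℝ → ℝ)
    (Ω : Set (EuclideanSpace ℝ (Fin n))) : Prop :=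
  ∃ C > (0 : ℝ), ∃ E : (EuclideanSpace ℝ (Fin n) → ℝ) → (EuclideanSpace ℝ (Fin n) → ℝ),
    (∀ u v, MemW n β φ Ω u → MemW n β φ Ω v → E (u + v) = E u + E v) ∧
    (∀ (c : ℝ) (u), MemW n β φ Ω u → E (c • u) = c • E u) ∧
    (∀ u, MemW n β φ Ω u →
      MemW n β φ Set.univ (E u) ∧
      (∀ᵐ x ∂(volume.restrict Ω), E u x = u x) ∧
      fracNorm n β φ Set.univ (E u) ≤ ENNReal.ofReal C * fracNorm n β φ Ω u)

end

/-! ### The radial kernel -/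

/-- Integration of a radial function in polar coordinates, for `[0,∞]`-valued integrands. -/
theorem lintegral_radial {n : ℕ} (hn : 1 ≤ n) (g : ℝ → ℝ≥0∞) (hg : Measurable g) :
    ∫⁻ v : EuclideanSpace ℝ (Fin n), g ‖v‖ =
      (n * volume (ball (0 : EuclideanSpace ℝ (Fin n)) 1)) *
        ∫⁻ s in Ioi (0 : ℝ), ENNReal.ofReal (s ^ (n - 1)) * g s := by
  have : Nonempty (Fin n) := ⟨⟨0, hn⟩⟩
  set E := EuclideanSpace ℝ (Fin n)
  have hfr : Module.finrank ℝ E = n := by simp [E]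
  have hmp := (volume : Measure E).measurePreserving_homeomorphUnitSphereProd
  have h1 : ∫⁻ v : E, g ‖v‖ = ∫⁻ v in ({0}ᶜ : Set E), g ‖v‖ := by
    rw [restrict_compl_singleton]
  have h2 : ∫⁻ v in ({0}ᶜ : Set E), g ‖v‖ =
      ∫⁻ v : ({0}ᶜ : Set E), g ‖(v : E)‖ ∂((volume : Measure E).comap (↑)) := by
    rw [← map_comap_subtype_coe (measurableSet_singleton (0 : E)).compl,
      (MeasurableEmbedding.subtype_coe (measurableSet_singleton (0 : E)).compl).lintegral_map]
  have h3 := hmp.lintegral_comp_emb (Homeomorph.measurableEmbedding _)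
    (fun p : sphere (0 : E) 1 × Ioi (0 : ℝ) => g p.2.1)
  simp only [homeomorphUnitSphereProd_apply_snd_coe] at h3
  rw [h1, h2, h3, lintegral_prod _ (by fun_prop)]
  simp only [lintegral_const, Measure.toSphere_apply_univ, hfr]
  rw [mul_comm]
  congr 1
  rw [Measure.volumeIoiPow, lintegral_withDensity_eq_lintegral_mul _ (by fun_prop) (by fun_prop)]
  rw [← map_comap_subtype_coe (measurableSet_Ioi (a := (0 : ℝ))),
    (MeasurableEmbedding.subtype_coe measurableSet_Ioi).lintegral_map]
  simp

theorem lintegral_tail (β : ℝ) (hβ : 0 < β) (ρ : ℝ) (hρ : 0 < ρ) :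
    ∫⁻ s in Ioi ρ, ENNReal.ofReal (1 / s ^ (β + 1)) = ENNReal.ofReal (ρ ^ (-β) / β) := by
  have h := integral_Ioi_rpow_of_lt (show -(β + 1) < -1 by linarith) hρ
  have hi := integrableOn_Ioi_rpow_of_lt (show -(β + 1) < -1 by linarith) hρ
  rw [setLIntegral_congr_fun (g := fun s => ENNReal.ofReal (s ^ (-(β + 1)))) measurableSet_Ioi,
    ← ofReal_integral_eq_lintegral_ofReal hi, h]
  · congr 1
    rw [show -(β + 1) + 1 = -β by ring]
    field_simp
  · filter_upwards [ae_restrict_mem measurableSet_Ioi] with s hs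
    exact Real.rpow_nonneg (hρ.le.trans (le_of_lt hs)) _
  · intro s hs
    simp only
    rw [Real.rpow_neg (hρ.le.trans (le_of_lt hs)), one_div]

/-- The near-diagonal part of the radial integral; the change of variables `s ↦ s t / ρ`
reduces it to the integral controlled by `C_β`. -/
theorem lintegral_near {β M : ℝ} {φ : ℝ → ℝ} (hpos : ∀ t > 0, 0 < φ t)
    (hM : CbetaLE β φ M) (hm : Measurable fun s => φ |s|)
    {ρ t : ℝ} (hρ : 0 < ρ) (ht : 0 < t) :
    ∫⁻ s in Ioc 0 ρ, ENNReal.ofReal (φ (s / ρ * t) / s ^ (β + 1)) ≤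
      ENNReal.ofReal (ρ ^ (-β) * φ t) * ENNReal.ofReal M := by
  set a : ℝ := t / ρ with ha
  have ha0 : 0 < a := by positivity
  set F : ℝ → ℝ≥0∞ := (Ioc 0 t).indicator fun s => ENNReal.ofReal (φ |s| / s ^ (β + 1)) with hF
  have hFm : Measurable F := by
    refine Measurable.indicator ?_ measurableSet_Ioc
    have : Measurable fun s : ℝ => s ^ (β + 1) := by fun_prop
    exact (hm.div this).ennreal_ofReal
  have e1 : ∫⁻ s in Ioc 0 t, ENNReal.ofReal (φ s / s ^ (β + 1)) = ∫⁻ s, F s := by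
    rw [hF, lintegral_indicator measurableSet_Ioc]
    refine setLIntegral_congr_fun measurableSet_Ioc fun s hs => ?_
    simp only [abs_of_pos hs.1]
  have e2 : ∫⁻ s, F s = ENNReal.ofReal a * ∫⁻ s, F (a * s) := by
    conv_lhs => rw [← Real.smul_map_volume_mul_left ha0.ne']
    rw [lintegral_smul_measure, lintegral_map hFm (by fun_prop), abs_of_pos ha0, smul_eq_mul]
  have e3 : ∫⁻ s in Ioc 0 ρ, ENNReal.ofReal (φ (s / ρ * t) / s ^ (β + 1)) =
      ENNReal.ofReal (a ^ (β + 1)) * ∫⁻ s, F (a * s) := by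
    rw [← lintegral_const_mul _ (by fun_prop), ← lintegral_indicator measurableSet_Ioc]
    refine lintegral_congr fun s => ?_
    by_cases hs : s ∈ Ioc 0 ρ
    · have hs' : a * s ∈ Ioc 0 t := by
        refine ⟨mul_pos ha0 hs.1, ?_⟩
        rw [ha, div_mul_eq_mul_div, div_le_iff₀ hρ]
        exact mul_le_mul_of_nonneg_left hs.2 ht.le
      rw [indicator_of_mem hs, hF, indicator_of_mem hs', ← ENNReal.ofReal_mul (by positivity),
        abs_of_pos hs'.1, Real.mul_rpow ha0.le hs.1.le]
      congr 1
      have h1 : 0 < a ^ (β + 1) := by positivity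
      have h2 : 0 < s ^ (β + 1) := Real.rpow_pos_of_pos hs.1 _
      rw [show s / ρ * t = a * s by rw [ha]; ring]
      field_simp
    · have hs' : a * s ∉ Ioc 0 t := by
        rintro ⟨h1, h2⟩
        refine hs ⟨pos_of_mul_pos_right h1 ha0.le, ?_⟩
        rw [ha, div_mul_eq_mul_div, div_le_iff₀ hρ] at h2
        exact le_of_mul_le_mul_left h2 ht
      rw [indicator_of_notMem hs, hF, indicator_of_notMem hs', mul_zero]
  have hM' := hM t ht
  rw [e1, e2] at hM'
  rw [e3]
  have hφt := hpos t ht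
  calc ENNReal.ofReal (a ^ (β + 1)) * ∫⁻ s, F (a * s)
      = ENNReal.ofReal (ρ ^ (-β) * φ t) *
        (ENNReal.ofReal (t ^ β / φ t) * (ENNReal.ofReal a * ∫⁻ s, F (a * s))) := by
        rw [← mul_assoc (ENNReal.ofReal (t ^ β / φ t)), ← mul_assoc,
          ← ENNReal.ofReal_mul (by positivity), ← ENNReal.ofReal_mul (by positivity)]
        congr 2
        rw [Real.rpow_add_one ha0.ne', ha, Real.div_rpow ht.le hρ.le, Real.rpow_neg hρ.le]
        field_simp
    _ ≤ _ := by gcongr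

/-- Bound for the integral of the radial kernel dominating the Gagliardo-type integrand of a
`1/ρ`-Lipschitz cutoff with values in `[0,1]`. -/
theorem lintegral_kernel {n : ℕ} (hn : 1 ≤ n) {β M : ℝ} (hβ : 0 < β) {φ : ℝ → ℝ}
    (hpos : ∀ t > 0, 0 < φ t)
    (hM : CbetaLE β φ M) (hm : Measurable fun s => φ |s|)
    {ρ t : ℝ} (hρ : 0 < ρ) (ht : 0 < t) :
    ∫⁻ v : EuclideanSpace ℝ (Fin n),
        ENNReal.ofReal (φ |min 1 (‖v‖ / ρ) * t| / ‖v‖ ^ ((n : ℝ) + β)) ≤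
      ENNReal.ofReal (n * (volume (ball (0 : EuclideanSpace ℝ (Fin n)) 1)).toReal *
        (max M 0 + 1 / β) * (ρ ^ (-β) * φ t)) := by
  have hφt := hpos t ht
  have hgm : Measurable fun s : ℝ =>
      ENNReal.ofReal (φ |min 1 (s / ρ) * t| / s ^ ((n : ℝ) + β)) := by
    have h1 : Measurable fun s : ℝ => φ |min 1 (s / ρ) * t| :=
      hm.comp (g := fun s => φ |s|) (f := fun s : ℝ => min 1 (s / ρ) * t) (by fun_prop)
    have h2 : Measurable fun s : ℝ => s ^ ((n : ℝ) + β) := by fun_prop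
    exact (h1.div h2).ennreal_ofReal
  rw [lintegral_radial hn _ hgm]
  have key : ∫⁻ s in Ioi (0 : ℝ), ENNReal.ofReal (s ^ (n - 1)) *
      ENNReal.ofReal (φ |min 1 (s / ρ) * t| / s ^ ((n : ℝ) + β)) ≤
      ENNReal.ofReal ((max M 0 + 1 / β) * (ρ ^ (-β) * φ t)) := by
    have e : ∀ s : ℝ, 0 < s → ENNReal.ofReal (s ^ (n - 1)) *
      ENNReal.ofReal (φ |min 1 (s / ρ) * t| / s ^ ((n : ℝ) + β)) =
        ENNReal.ofReal (φ (min 1 (s / ρ) * t) / s ^ (β + 1)) := by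
      intro s hs
      have : 0 < min 1 (s / ρ) * t := mul_pos (lt_min one_pos (by positivity)) ht
      rw [← ENNReal.ofReal_mul (by positivity), abs_of_pos this]
      congr 1
      have h3 : s ^ ((n : ℝ) + β) = s ^ (n - 1) * s ^ (β + 1) := by
        rw [← Real.rpow_natCast, ← Real.rpow_add hs, Nat.cast_sub hn]
        congr 1
        push_cast
        ring
      rw [h3]
      have : 0 < s ^ (β + 1) := by positivity
      field_simp
    rw [setLIntegral_congr_fun measurableSet_Ioi e, ← Ioc_union_Ioi_eq_Ioi hρ.le]
    refine (lintegral_union_le _ _ _).trans ?_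
    have hA : ∫⁻ s in Ioc 0 ρ, ENNReal.ofReal (φ (min 1 (s / ρ) * t) / s ^ (β + 1)) ≤
        ENNReal.ofReal (ρ ^ (-β) * φ t) * ENNReal.ofReal M := by
      rw [setLIntegral_congr_fun (g := fun s => ENNReal.ofReal (φ (s / ρ * t) / s ^ (β + 1)))
        measurableSet_Ioc]
      · exact lintegral_near hpos hM hm hρ ht
      · intro s hs
        simp only
        rw [min_eq_right ((div_le_one hρ).2 hs.2)]
    have hB : ∫⁻ s in Ioi ρ, ENNReal.ofReal (φ (min 1 (s / ρ) * t) / s ^ (β + 1)) =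
        ENNReal.ofReal (φ t) * ENNReal.ofReal (ρ ^ (-β) / β) := by
      rw [← lintegral_tail β hβ ρ hρ, ← lintegral_const_mul _ (by fun_prop)]
      refine setLIntegral_congr_fun measurableSet_Ioi fun s hs => ?_
      rw [min_eq_left ((one_le_div hρ).2 (le_of_lt hs)), ← ENNReal.ofReal_mul hφt.le, one_mul,
        mul_one_div]
    rw [hB]
    refine (add_le_add_left hA _).trans ?_
    have : ENNReal.ofReal M = ENNReal.ofReal (max M 0) := by simp
    rw [this, ← ENNReal.ofReal_mul (by positivity), ← ENNReal.ofReal_mul (by positivity),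
      ← ENNReal.ofReal_add (by positivity) (by positivity)]
    refine ENNReal.ofReal_le_ofReal (le_of_eq ?_)
    ring
  have hb : (n : ℝ≥0∞) * volume (ball (0 : EuclideanSpace ℝ (Fin n)) 1) =
      ENNReal.ofReal (n * (volume (ball (0 : EuclideanSpace ℝ (Fin n)) 1)).toReal) := by
    rw [ENNReal.ofReal_mul (by positivity), ENNReal.ofReal_toReal measure_ball_lt_top.ne]
    simp
  rw [hb, mul_assoc (_ * _) (_ + _), ENNReal.ofReal_mul
    (p := n * (volume (ball (0 : EuclideanSpace ℝ (Fin n)) 1)).toReal) (by positivity)]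
  exact mul_le_mul_right key _

/-! ### Young functions -/

theorem young_mono {φ : ℝ → ℝ} (hφ : IsYoung φ) {a b : ℝ} (ha : 0 ≤ a) (hab : a ≤ b) :
    φ a ≤ φ b := by
  obtain ⟨-, hc, h0, hp⟩ := hφ
  rcases eq_or_lt_of_le (ha.trans hab) with hb | hb
  · rw [show a = b by linarith]
  · have h := hc.2 (show (0 : ℝ) ∈ Ici 0 by simp) (show b ∈ Ici 0 from hb.le)
      (show 0 ≤ 1 - a / b by rw [sub_nonneg, div_le_one hb]; exact hab)
      (show 0 ≤ a / b by positivity) (by ring)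
    simp only [smul_eq_mul, mul_zero, zero_add, h0] at h
    rw [div_mul_cancel₀ _ hb.ne'] at h
    refine h.trans (mul_le_of_le_one_left (hp b hb).le ((div_le_one hb).2 hab))

theorem young_continuous_abs {φ : ℝ → ℝ} (hφ : IsYoung φ) : Continuous fun s => φ |s| :=
  hφ.1.comp_continuous continuous_abs fun s => abs_nonneg s

theorem young_surj {φ : ℝ → ℝ} (hφ : IsYoung φ) {y : ℝ} (hy : 0 < y) : ∃ t > 0, φ t = y := by
  obtain ⟨hcont, hc, h0, hp⟩ := hφ
  have h1 := hp 1 one_pos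
  set b : ℝ := max 1 (y / φ 1)
  have hb : 1 ≤ b := le_max_left _ _
  have hb0 : 0 < b := by linarith
  -- convexity and `φ 0 = 0` give linear growth: `b φ(1) ≤ φ(b)`
  have h := hc.2 (show (0 : ℝ) ∈ Ici 0 by simp) (show b ∈ Ici 0 from hb0.le)
    (show 0 ≤ 1 - 1 / b by rw [sub_nonneg, div_le_one hb0]; exact hb)
    (show 0 ≤ 1 / b by positivity) (by ring)
  simp only [smul_eq_mul, mul_zero, zero_add, h0] at h
  rw [div_mul_cancel₀ _ hb0.ne', div_mul_eq_mul_div, one_mul, le_div_iff₀ hb0] at h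
  have hy2 : y ≤ φ b := by
    refine le_trans ?_ h
    have : y / φ 1 ≤ b := le_max_right _ _
    rw [div_le_iff₀ h1] at this
    linarith
  obtain ⟨t, ht, hty⟩ := intermediate_value_Icc hb0.le
    (hcont.mono (Icc_subset_Ici_self)) (show y ∈ Icc (φ 0) (φ b) from ⟨by rw [h0]; exact hy.le, hy2⟩)
  refine ⟨t, lt_of_le_of_ne ht.1 ?_, hty⟩
  rintro rfl
  linarith

theorem young_doubling {φ : ℝ → ℝ} (hφ : IsYoung φ) {K : ℝ} (hK : IsDoubling φ K) {C : ℝ}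
    (hC : 0 < C) : ∃ L > 0, ∀ t > 0, φ t ≤ L * φ (t / C) := by
  obtain ⟨k, hk⟩ := pow_unbounded_of_one_lt C (one_lt_two)
  have hK0 : 0 < K := by linarith [hK.1]
  have hpow : ∀ j : ℕ, ∀ t > 0, φ (2 ^ j * t) ≤ K ^ j * φ t := by
    intro j
    induction j with
    | zero => simp
    | succ j ih =>
      intro t ht
      calc φ (2 ^ (j + 1) * t) = φ (2 * (2 ^ j * t)) := by ring_nf
        _ ≤ K * φ (2 ^ j * t) := hK.2 _ (by positivity)
        _ ≤ K * (K ^ j * φ t) := by gcongr; exact ih t ht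
        _ = _ := by ring
  refine ⟨K ^ k, by positivity, fun t ht => ?_⟩
  refine le_trans (young_mono hφ ht.le ?_) (hpow k (t / C) (by positivity))
  rw [mul_div_assoc', le_div_iff₀ hC, mul_comm]
  gcongr

/-! ### Energy of cutoffs -/

/-- The Lipschitz cutoff equal to `1` on `B(x, r - ρ)` and to `0` off `B(x, r)`. -/
noncomputable def cutoff {n : ℕ} (x : EuclideanSpace ℝ (Fin n)) (r ρ : ℝ)
    (y : EuclideanSpace ℝ (Fin n)) : ℝ :=
  max 0 (min 1 ((r - dist y x) / ρ))

theorem cutoff_diff {n : ℕ} (x : EuclideanSpace ℝ (Fin n)) {r ρ : ℝ} (hρ : 0 < ρ)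
    (y z : EuclideanSpace ℝ (Fin n)) :
    |cutoff x r ρ y - cutoff x r ρ z| ≤ min 1 (‖y - z‖ / ρ) := by
  refine le_min ?_ ?_
  · have h (y) : 0 ≤ cutoff x r ρ y ∧ cutoff x r ρ y ≤ 1 :=
      ⟨le_max_left _ _, max_le zero_le_one (min_le_left _ _)⟩
    rw [abs_le]
    constructor <;> linarith [(h y).1, (h y).2, (h z).1, (h z).2]
  · calc |cutoff x r ρ y - cutoff x r ρ z|
        ≤ |min 1 ((r - dist y x) / ρ) - min 1 ((r - dist z x) / ρ)| := by
          refine (abs_max_sub_max_le_max _ _ _ _).trans ?_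
          simp
      _ ≤ |(r - dist y x) / ρ - (r - dist z x) / ρ| := by
          refine (abs_min_sub_min_le_max _ _ _ _).trans ?_
          simp
      _ = |dist z x - dist y x| / ρ := by
          rw [← sub_div, abs_div, abs_of_pos hρ]
          congr 2
          ring
      _ ≤ ‖y - z‖ / ρ := by
          gcongr
          exact (abs_dist_sub_le z y x).trans_eq (by rw [dist_comm, dist_eq_norm])

/-- Gagliardo-type energy of the cutoff: only pairs with a point in `B(x,r) ∩ Ω` contribute,
and each such point contributes at most the integral of the kernel. -/
theorem fracIntegral_cutoff {n : ℕ} {β : ℝ} {φ : ℝ → ℝ} (hφ : IsYoung φ)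
    {Ω : Set (EuclideanSpace ℝ (Fin n))} (hΩ : MeasurableSet Ω)
    (x : EuclideanSpace ℝ (Fin n)) {r ρ t : ℝ} (hρ : 0 < ρ) (ht : 0 < t) :
    fracIntegral n β φ Ω (cutoff x r ρ) (1 / t) ≤
      2 * (volume (ball x r ∩ Ω) * ∫⁻ v : EuclideanSpace ℝ (Fin n),
        ENNReal.ofReal (φ |min 1 (‖v‖ / ρ) * t| / ‖v‖ ^ ((n : ℝ) + β))) := by
  set G : EuclideanSpace ℝ (Fin n) → ℝ≥0∞ := fun v =>
    ENNReal.ofReal (φ |min 1 (‖v‖ / ρ) * t| / ‖v‖ ^ ((n : ℝ) + β)) with hG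
  have hGm : Measurable G := by
    have h1 : Measurable fun v : EuclideanSpace ℝ (Fin n) => φ |min 1 (‖v‖ / ρ) * t| :=
      (young_continuous_abs hφ).measurable.comp (g := fun s => φ |s|)
        (f := fun v : EuclideanSpace ℝ (Fin n) => min 1 (‖v‖ / ρ) * t) (by fun_prop)
    have h2 : Measurable fun v : EuclideanSpace ℝ (Fin n) => ‖v‖ ^ ((n : ℝ) + β) := by fun_prop
    exact (h1.div h2).ennreal_ofReal
  set B : Set (EuclideanSpace ℝ (Fin n)) := ball x r ∩ Ω
  have hB : MeasurableSet B := measurableSet_ball.inter hΩ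
  set χ : EuclideanSpace ℝ (Fin n) → ℝ≥0∞ := B.indicator 1 with hχ
  have hχm : Measurable χ := measurable_one.indicator hB
  have hout : ∀ y, y ∈ Ω → y ∉ B → cutoff x r ρ y = 0 := by
    intro y hy hyB
    have : r ≤ dist y x := by
      by_contra h
      exact hyB ⟨by simpa using h, hy⟩
    refine max_eq_left ((min_le_right _ _).trans ?_)
    exact div_nonpos_of_nonpos_of_nonneg (by linarith) hρ.le
  have hpt : ∀ y ∈ Ω, ∀ z ∈ Ω,
      ENNReal.ofReal (φ (|cutoff x r ρ y - cutoff x r ρ z| / (1 / t)) /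
        dist y z ^ ((n : ℝ) + β)) ≤ χ y * G (y - z) + χ z * G (y - z) := by
    intro y hy z hz
    by_cases h : y ∈ B ∨ z ∈ B
    · have hle : ENNReal.ofReal (φ (|cutoff x r ρ y - cutoff x r ρ z| / (1 / t)) /
          dist y z ^ ((n : ℝ) + β)) ≤ G (y - z) := by
        simp only [hG]
        refine ENNReal.ofReal_le_ofReal ?_
        rw [dist_eq_norm]
        refine div_le_div_of_nonneg_right ?_ (by positivity)
        refine young_mono hφ (by positivity) ?_
        rw [div_div_eq_mul_div, div_one]
        refine le_trans ?_ (le_abs_self _)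
        gcongr
        exact cutoff_diff x hρ y z
      refine hle.trans ?_
      rcases h with h | h
      · simp [hχ, h]
      · simp [hχ, h]
    · push Not at h
      rw [hout y hy h.1, hout z hz h.2]
      simp [hφ.2.2.1]
  have hinner : ∀ y : EuclideanSpace ℝ (Fin n), ∫⁻ z, G (y - z) = ∫⁻ v, G v := fun y =>
    lintegral_sub_left_eq_self (fun v => G v) y
  have hinner' : ∀ z : EuclideanSpace ℝ (Fin n), ∫⁻ y, G (y - z) = ∫⁻ v, G v := fun z =>
    lintegral_sub_right_eq_self (fun v => G v) z
  calc fracIntegral n β φ Ω (cutoff x r ρ) (1 / t)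
      ≤ ∫⁻ y in Ω, ∫⁻ z in Ω, (χ y * G (y - z) + χ z * G (y - z)) := by
        refine setLIntegral_mono' hΩ fun y hy => setLIntegral_mono' hΩ fun z hz => hpt y hy z hz
    _ ≤ ∫⁻ y, ∫⁻ z, (χ y * G (y - z) + χ z * G (y - z)) :=
        (setLIntegral_le_lintegral _ _).trans
          (lintegral_mono fun y => setLIntegral_le_lintegral _ _)
    _ = (∫⁻ y, ∫⁻ z, χ y * G (y - z)) + ∫⁻ y, ∫⁻ z, χ z * G (y - z) := by
        rw [← lintegral_add_left (by fun_prop)]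
        refine lintegral_congr fun y => ?_
        rw [lintegral_add_left (by fun_prop)]
    _ = volume B * (∫⁻ v, G v) + volume B * ∫⁻ v, G v := by
        have hvol : ∫⁻ y, χ y = volume B := lintegral_indicator_one hB
        congr 1
        · rw [← hvol, ← lintegral_mul_const _ hχm]
          refine lintegral_congr fun y => ?_
          rw [lintegral_const_mul _ (by fun_prop), hinner]
        · rw [lintegral_lintegral_swap (by fun_prop), ← hvol, ← lintegral_mul_const _ hχm]
          refine lintegral_congr fun z => ?_
          rw [lintegral_const_mul _ (by fun_prop), hinner']
    _ = _ := by ring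

/-- One step of the shrinking argument: if `B(x,s) ∩ Ω` and `B(x,r) ∩ Ω` have comparable measure
and `Ω` has enough mass outside `B(x,r)`, then testing the imbedding on a cutoff shows
`r - s ≤ A |B(x,r) ∩ Ω|^{1/n}` with a uniform constant. -/
theorem radius_gap {n : ℕ} (hn : 1 ≤ n) {β : ℝ} (hβ : β ∈ Set.Ioo (0 : ℝ) (n : ℝ))
    {φ : ℝ → ℝ} (hφ : IsYoung φ) (hdbl : ∃ K : ℝ, IsDoubling φ K)
    (hCβ : CbetaFinite β φ)
    {Ω : Set (EuclideanSpace ℝ (Fin n))} (hΩopen : IsOpen Ω)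
    (hI : ∃ C > (0 : ℝ), ∀ u : EuclideanSpace ℝ (Fin n) → ℝ, MemW n β φ Ω u →
      (⨅ c : ℝ, luxNorm n (fun t => φ t ^ ((n : ℝ) / ((n : ℝ) - β))) Ω (fun x => u x - c))
        ≤ ENNReal.ofReal C * fracNorm n β φ Ω u) :
    ∃ A > (0 : ℝ), ∀ x ∈ Ω, ∀ s r : ℝ, s < r → 0 < r →
      volume (ball x r ∩ Ω) ≤ 2 * volume (ball x s ∩ Ω) →
      volume (ball x r ∩ Ω) ≤ 2 * volume (Ω \ ball x r) →
      r - s ≤ A * (volume (ball x r ∩ Ω)).toReal ^ (1 / (n : ℝ)) := by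
  obtain ⟨hβ0, hβn⟩ := hβ
  obtain ⟨K, hK⟩ := hdbl
  obtain ⟨M, hM⟩ := hCβ
  obtain ⟨C, hC, hI⟩ := hI
  obtain ⟨L, hL, hdL⟩ := young_doubling hφ hK (show 0 < 4 * C by positivity)
  have hn0 : (0 : ℝ) < n := by linarith
  have hV : 0 < (volume (ball (0 : EuclideanSpace ℝ (Fin n)) 1)).toReal :=
    ENNReal.toReal_pos (measure_ball_pos _ _ one_pos).ne' measure_ball_lt_top.ne
  set Q : ℝ := n * (volume (ball (0 : EuclideanSpace ℝ (Fin n)) 1)).toReal *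
        (max M 0 + 1 / β) with hQ
  have hQ0 : 0 < Q := by
    have : 0 ≤ max M 0 := le_max_right _ _
    positivity
  set p : ℝ := (n : ℝ) / ((n : ℝ) - β) with hp
  have hnβ : 0 < (n : ℝ) - β := by linarith
  have hp0 : 0 < p := by positivity
  have hp1 : 1 ≤ p := by rw [hp, le_div_iff₀ hnβ]; linarith
  refine ⟨(4 * Q * L) ^ (1 / β), by positivity, fun x hx s r hsr hr hhalf hout => ?_⟩
  have hΩm := hΩopen.measurableSet
  set m : ℝ := (volume (ball x r ∩ Ω)).toReal with hm
  have hfin : volume (ball x r ∩ Ω) ≠ ∞ :=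
    ((measure_mono inter_subset_left).trans_lt measure_ball_lt_top).ne
  have hm0 : 0 < m := by
    refine ENNReal.toReal_pos (IsOpen.measure_pos _ (isOpen_ball.inter hΩopen)
      ⟨x, mem_ball_self hr, hx⟩).ne' hfin
  have hvm : volume (ball x r ∩ Ω) = ENNReal.ofReal m := (ENNReal.ofReal_toReal hfin).symm
  set ρ : ℝ := r - s with hρdef
  have hρ : 0 < ρ := by simpa [hρdef] using hsr
  -- `1 / t` is the Luxemburg parameter for which the energy bound of the cutoff equals `1`
  obtain ⟨t, ht, hφt⟩ := young_surj hφ (show 0 < ρ ^ β / (2 * m * Q) by positivity)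
  have hE : fracIntegral n β φ Ω (cutoff x r ρ) (1 / t) ≤ 1 := by
    refine (fracIntegral_cutoff hφ hΩm x hρ ht).trans ?_
    have hk := lintegral_kernel hn hβ0 hφ.2.2.2 hM (young_continuous_abs hφ).measurable hρ ht
    rw [← hQ] at hk
    rw [hvm]
    calc _ ≤ 2 * (ENNReal.ofReal m * ENNReal.ofReal (Q * (ρ ^ (-β) * φ t))) := by gcongr
      _ = ENNReal.ofReal (2 * (m * (Q * (ρ ^ (-β) * φ t)))) := by
        rw [ENNReal.ofReal_mul two_pos.le, ENNReal.ofReal_mul hm0.le, ENNReal.ofReal_ofNat]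
      _ = 1 := by
        rw [hφt, Real.rpow_neg hρ.le, ← ENNReal.ofReal_one]
        congr 1
        have : 0 < ρ ^ β := by positivity
        field_simp
  have hN : fracNorm n β φ Ω (cutoff x r ρ) ≤ ENNReal.ofReal (1 / t) := by
    refine sInf_le ⟨by simpa using ht, ENNReal.ofReal_ne_top, ?_⟩
    rwa [ENNReal.toReal_ofReal (by positivity)]
  have hcont : Continuous (cutoff x r ρ) := by unfold cutoff; fun_prop
  have hlt := (hI (cutoff x r ρ) ⟨hcont.locallyIntegrable.locallyIntegrableOn _,
    (hN.trans_lt ENNReal.ofReal_lt_top).ne⟩).trans_lt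
    (show ENNReal.ofReal C * fracNorm n β φ Ω (cutoff x r ρ) < ENNReal.ofReal (2 * C / t) from by
      refine (mul_le_mul_right hN _).trans_lt ?_
      rw [← ENNReal.ofReal_mul hC.le, ENNReal.ofReal_lt_ofReal_iff (by positivity),
        mul_one_div]
      gcongr
      linarith)
  obtain ⟨c, hc⟩ := iInf_lt_iff.1 hlt
  obtain ⟨lam, ⟨hlam0, hlamt, hlam⟩, hlamlt⟩ := sInf_lt_iff.1 hc
  set l := lam.toReal with hl
  have hl0 : 0 < l := ENNReal.toReal_pos hlam0.ne' hlamt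
  have hlt2 : l ≤ 2 * C / t := ENNReal.toReal_le_of_le_ofReal (by positivity) hlamlt.le
  -- the constant `c` is at distance at least `1/2` from one of the two values `0` and `1`
  have hset : ∃ S : Set (EuclideanSpace ℝ (Fin n)), MeasurableSet S ∧ S ⊆ Ω ∧
      ENNReal.ofReal (m / 2) ≤ volume S ∧ ∀ y ∈ S, 1 / 2 ≤ |cutoff x r ρ y - c| := by
    have h2 : ∀ a : ℝ≥0∞, ENNReal.ofReal m ≤ 2 * a → ENNReal.ofReal (m / 2) ≤ a := by
      intro a ha
      rw [ENNReal.ofReal_div_of_pos two_pos]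
      refine ENNReal.div_le_of_le_mul ?_
      simpa [mul_comm] using ha
    rcases le_total c (1 / 2) with hc2 | hc2
    · refine ⟨ball x s ∩ Ω, measurableSet_ball.inter hΩm, inter_subset_right,
        h2 _ (hvm ▸ hhalf), fun y hy => ?_⟩
      have hd : dist y x < s := hy.1
      have : cutoff x r ρ y = 1 := by
        unfold cutoff
        rw [min_eq_left ((one_le_div hρ).2 (by linarith)), max_eq_right zero_le_one]
      rw [this, le_abs]
      left; linarith
    · refine ⟨Ω \ ball x r, hΩm.diff measurableSet_ball, sdiff_subset,
        h2 _ (hvm ▸ hout), fun y hy => ?_⟩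
      have hd : r ≤ dist y x := by simpa using hy.2
      have : cutoff x r ρ y = 0 := by
        refine max_eq_left ((min_le_right _ _).trans ?_)
        exact div_nonpos_of_nonpos_of_nonneg (by linarith) hρ.le
      rw [this, le_abs]
      right; linarith
  obtain ⟨S, hSm, hSΩ, hSv, hSc⟩ := hset
  have hφ4 : φ t / L ≤ φ (t / (4 * C)) := by
    rw [div_le_iff₀ hL, mul_comm]; exact hdL t ht
  have hφt0 : 0 < φ t := hφ.2.2.2 t ht
  have hreal : (φ t / L) ^ p * (m / 2) ≤ 1 := by
    rw [← ENNReal.ofReal_le_ofReal_iff zero_le_one, ENNReal.ofReal_mul (by positivity),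
      ENNReal.ofReal_one]
    refine le_trans ?_ hlam
    calc ENNReal.ofReal ((φ t / L) ^ p) * ENNReal.ofReal (m / 2)
        ≤ ENNReal.ofReal ((φ t / L) ^ p) * volume S := by gcongr
      _ = ∫⁻ _ in S, ENNReal.ofReal ((φ t / L) ^ p) := by rw [setLIntegral_const]
      _ ≤ ∫⁻ y in S, ENNReal.ofReal (φ (|cutoff x r ρ y - c| / l) ^ p) := by
        refine setLIntegral_mono' hSm fun y hy => ENNReal.ofReal_le_ofReal ?_
        refine Real.rpow_le_rpow (by positivity) (hφ4.trans ?_) hp0.le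
        refine young_mono hφ (by positivity) ?_
        rw [le_div_iff₀ hl0]
        refine le_trans ?_ (hSc y hy)
        calc t / (4 * C) * l ≤ t / (4 * C) * (2 * C / t) := by gcongr
          _ = 1 / 2 := by field_simp; norm_num
      _ ≤ _ := lintegral_mono_set hSΩ
  -- solve for `ρ`, using `1 - 1/p = β/n`
  have hbase : φ t / L ≤ (2 / m) ^ (1 / p) := by
    have h : (φ t / L) ^ p ≤ 2 / m := by
      rw [le_div_iff₀ hm0]
      linarith
    calc φ t / L = ((φ t / L) ^ p) ^ (1 / p) := by
          rw [← Real.rpow_mul (by positivity), mul_one_div_cancel hp0.ne', Real.rpow_one]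
      _ ≤ _ := Real.rpow_le_rpow (by positivity) h (by positivity)
  have hρβ : ρ ^ β ≤ (4 * Q * L) * m ^ (β / n) := by
    have h2 : (2 : ℝ) ^ (1 / p) ≤ 2 := by
      calc (2 : ℝ) ^ (1 / p) ≤ 2 ^ (1 : ℝ) :=
            Real.rpow_le_rpow_of_exponent_le one_le_two ((div_le_one hp0).2 hp1)
        _ = 2 := Real.rpow_one 2
    have h3 : m * m ^ (-(1 / p)) = m ^ (β / n) := by
      rw [← Real.rpow_one_add' hm0.le]
      · congr 1
        rw [hp]
        field_simp
        ring
      · rw [hp]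
        field_simp
        ring_nf
        positivity
    calc ρ ^ β = 2 * m * Q * L * (φ t / L) := by rw [hφt]; field_simp
      _ ≤ 2 * m * Q * L * (2 / m) ^ (1 / p) := by gcongr
      _ = 2 * Q * L * 2 ^ (1 / p) * (m * m ^ (-(1 / p))) := by
        rw [Real.div_rpow two_pos.le hm0.le, Real.rpow_neg hm0.le]
        ring
      _ = 2 * Q * L * 2 ^ (1 / p) * m ^ (β / n) := by rw [h3]
      _ ≤ 2 * Q * L * 2 * m ^ (β / n) := by gcongr
      _ = _ := by ring
  calc ρ = (ρ ^ β) ^ (1 / β) := by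
        rw [← Real.rpow_mul hρ.le, mul_one_div_cancel hβ0.ne', Real.rpow_one]
    _ ≤ ((4 * Q * L) * m ^ (β / n)) ^ (1 / β) :=
        Real.rpow_le_rpow (by positivity) hρβ (by positivity)
    _ = _ := by
        rw [Real.mul_rpow (by positivity) (by positivity), ← Real.rpow_mul hm0.le]
        congr 2
        field_simp

/-! ### Measure lower bounds -/

/-- The iteration behind the measure lower bound: if moving from radius `s` down to `s - B F(s)`
always contracts `F` by the factor `q < 1`, then a geometric series bounds `r` by `F r`.
Otherwise `s - B / (1 - q) * F s` stays bounded below by a positive number along the iteration,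
while `F` tends to zero. -/
theorem shrink_iteration {F : ℝ → ℝ} {B q r : ℝ} (hB : 0 < B) (hq0 : 0 < q) (hq1 : q < 1)
    (hr : 0 < r) (hF : Monotone F) (hpos : ∀ s, 0 < s → 0 < F s)
    (hstep : ∀ s, 0 < s → s ≤ r → 0 < s - B * F s → F (s - B * F s) ≤ q * F s) :
    r ≤ B / (1 - q) * F r := by
  by_contra! hcon
  set D := B / (1 - q) with hD
  have h1q : 0 < 1 - q := by linarith
  have hDB : D * (1 - q) = B := by rw [hD]; field_simp
  have hD0 : 0 < D := by positivity
  set η := r - D * F r with hη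
  have hη0 : 0 < η := by linarith
  have hit : ∀ j : ℕ, ∃ s, η ≤ s ∧ s ≤ r ∧ η ≤ s - D * F s ∧ F s ≤ q ^ j * F r := by
    intro j
    induction j with
    | zero =>
      refine ⟨r, ?_, le_rfl, le_rfl, by simp⟩
      have := hpos r hr
      nlinarith
    | succ j ih =>
      obtain ⟨s, hs1, hs2, hs3, hs4⟩ := ih
      have hs0 : 0 < s := by linarith
      have hFs := hpos s hs0
      have hBD : B ≤ D := by nlinarith
      have hs' : η ≤ s - B * F s := by nlinarith
      have hst := hstep s hs0 hs2 (by linarith)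
      refine ⟨s - B * F s, hs', by nlinarith, ?_, ?_⟩
      · have : D * F (s - B * F s) ≤ D * (q * F s) := by gcongr
        have e : B * F s = D * (1 - q) * F s := by rw [hDB]
        nlinarith
      · calc _ ≤ q * F s := hst
          _ ≤ q * (q ^ j * F r) := by gcongr
          _ = _ := by ring
  have hlim : Tendsto (fun j : ℕ => q ^ j * F r) atTop (𝓝 0) := by
    simpa using (tendsto_pow_atTop_nhds_zero_of_lt_one hq0.le hq1).mul_const (F r)
  have hge : F η ≤ 0 := ge_of_tendsto' hlim fun j => by
    obtain ⟨s, hs1, -, -, hs4⟩ := hit j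
    exact (hF hs1).trans hs4
  linarith [hpos η hη0]

/-- Lower measure bound at every scale for which `Ω` keeps at least a comparable amount of mass
outside the ball. -/
theorem radius_le_of_mass_outside {n : ℕ} (hn : 1 ≤ n) {Ω : Set (EuclideanSpace ℝ (Fin n))}
    (hΩopen : IsOpen Ω) {A : ℝ} (hA : 0 < A)
    (hgap : ∀ x ∈ Ω, ∀ s r : ℝ, s < r → 0 < r →
      volume (ball x r ∩ Ω) ≤ 2 * volume (ball x s ∩ Ω) →
      volume (ball x r ∩ Ω) ≤ 2 * volume (Ω \ ball x r) →
      r - s ≤ A * (volume (ball x r ∩ Ω)).toReal ^ (1 / (n : ℝ))) :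
    ∃ A' > (0 : ℝ), ∀ x ∈ Ω, ∀ r > 0, volume (ball x r ∩ Ω) ≤ 2 * volume (Ω \ ball x r) →
      r ≤ A' * (volume (ball x r ∩ Ω)).toReal ^ (1 / (n : ℝ)) := by
  have hn0 : (0 : ℝ) < n := by exact_mod_cast hn
  set q : ℝ := (1 / 2) ^ (1 / (n : ℝ)) with hq
  have hq0 : 0 < q := by positivity
  have hq1 : q < 1 := Real.rpow_lt_one (by norm_num) (by norm_num) (by positivity)
  have h1q : 0 < 1 - q := by linarith
  refine ⟨2 * A / (1 - q), by positivity, fun x hx r hr hout => ?_⟩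
  have hfin : ∀ s, volume (ball x s ∩ Ω) ≠ ∞ := fun s =>
    ((measure_mono inter_subset_left).trans_lt measure_ball_lt_top).ne
  have hmono : Monotone fun s => (volume (ball x s ∩ Ω)).toReal ^ (1 / (n : ℝ)) := by
    intro a b hab
    refine Real.rpow_le_rpow ENNReal.toReal_nonneg ?_ (by positivity)
    exact ENNReal.toReal_mono (hfin b) (measure_mono (inter_subset_inter_left _
      (ball_subset_ball hab)))
  have hpos : ∀ s, 0 < s → 0 < (volume (ball x s ∩ Ω)).toReal ^ (1 / (n : ℝ)) := fun s hs =>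
    Real.rpow_pos_of_pos (ENNReal.toReal_pos (IsOpen.measure_pos _ (isOpen_ball.inter hΩopen)
      ⟨x, mem_ball_self hs, hx⟩).ne' (hfin s)) _
  refine shrink_iteration (F := fun s => (volume (ball x s ∩ Ω)).toReal ^ (1 / (n : ℝ)))
    (by positivity) hq0 hq1 hr hmono hpos fun s hs0 hsr hs' => ?_
  have hF := hpos s hs0
  set s' := s - 2 * A * (volume (ball x s ∩ Ω)).toReal ^ (1 / (n : ℝ)) with hsdef
  -- a gap of `2 A F(s)` is too wide for the two balls to have comparable measure
  have hhalf : 2 * volume (ball x s' ∩ Ω) ≤ volume (ball x s ∩ Ω) := by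
    by_contra! hcon
    have hAF := mul_pos hA hF
    have hout' : volume (ball x s ∩ Ω) ≤ 2 * volume (Ω \ ball x s) :=
      (measure_mono (inter_subset_inter_left _ (ball_subset_ball hsr))).trans (hout.trans (by
        gcongr))
    have := hgap x hx s' s (by linarith) hs0 hcon.le hout'
    linarith
  rw [hq, ← Real.mul_rpow (by norm_num) ENNReal.toReal_nonneg]
  refine Real.rpow_le_rpow ENNReal.toReal_nonneg ?_ (by positivity)
  have := ENNReal.toReal_mono (hfin s) hhalf
  rw [ENNReal.toReal_mul, ENNReal.toReal_ofNat] at this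
  linarith

/-- In a domain of finite measure, two disjoint balls of radius `|y - z| / 2` around `y, z ∈ Ω`
cannot both carry more than half of the mass, so the previous bound applies to one of them and
controls `|y - z|` by `|Ω|^{1/n}`. -/
theorem dist_le_of_finite_volume {n : ℕ} {Ω : Set (EuclideanSpace ℝ (Fin n))}
    {A : ℝ} (hA : 0 < A)
    (hrad : ∀ x ∈ Ω, ∀ r > 0, volume (ball x r ∩ Ω) ≤ 2 * volume (Ω \ ball x r) →
      r ≤ A * (volume (ball x r ∩ Ω)).toReal ^ (1 / (n : ℝ))) (hfin : volume Ω ≠ ∞)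
    {y z : EuclideanSpace ℝ (Fin n)} (hy : y ∈ Ω) (hz : z ∈ Ω) :
    dist y z ≤ 2 * A * (volume Ω).toReal ^ (1 / (n : ℝ)) := by
  rcases eq_or_lt_of_le (dist_nonneg (x := y) (y := z)) with h0 | h0
  · rw [← h0]; positivity
  set s := dist y z / 2 with hs
  have hs0 : 0 < s := by positivity
  have hmono : ∀ x, A * (volume (ball x s ∩ Ω)).toReal ^ (1 / (n : ℝ)) ≤
      A * (volume Ω).toReal ^ (1 / (n : ℝ)) := by
    intro x
    have := ENNReal.toReal_mono hfin (measure_mono (μ := volume)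
      (inter_subset_right (s := ball x s) (t := Ω)))
    gcongr
  have hdis : Disjoint (ball y s) (ball z s) := ball_disjoint_ball (by rw [hs]; linarith)
  have h1 : volume (ball y s ∩ Ω) ≤ volume (Ω \ ball z s) :=
    measure_mono fun w hw => ⟨hw.2, fun h => disjoint_left.1 hdis hw.1 h⟩
  have h2 : volume (ball z s ∩ Ω) ≤ volume (Ω \ ball y s) :=
    measure_mono fun w hw => ⟨hw.2, fun h => disjoint_left.1 hdis h hw.1⟩
  have htwo : ∀ a : ℝ≥0∞, a ≤ 2 * a := fun a => by rw [two_mul]; exact le_self_add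
  rcases le_total (volume (ball y s ∩ Ω)) (volume (ball z s ∩ Ω)) with h | h
  · have := (hrad y hy s hs0 ((h.trans h2).trans (htwo _))).trans (hmono y)
    linarith
  · have := (hrad z hz s hs0 ((h.trans h1).trans (htwo _))).trans (hmono z)
    linarith

/-- the imbedding (case `0 < β < n`) implies Ahlfors `n`-regularity. -/
theorem imbedding_low_implies_ahlfors
    (n : ℕ) (hn : 1 ≤ n) (β : ℝ) (hβ : β ∈ Set.Ioo (0 : ℝ) (n : ℝ))
    (φ : ℝ → ℝ) (hφ : IsYoung φ) (hdbl : ∃ K : ℝ, IsDoubling φ K)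
    (hCβ : CbetaFinite β φ)
    (Ω : Set (EuclideanSpace ℝ (Fin n))) (hΩopen : IsOpen Ω) (hΩconn : IsConnected Ω)
    (hI : ∃ C > (0 : ℝ), ∀ u : EuclideanSpace ℝ (Fin n) → ℝ, MemW n β φ Ω u →
      (⨅ c : ℝ, luxNorm n (fun t => φ t ^ ((n : ℝ) / ((n : ℝ) - β))) Ω (fun x => u x - c))
        ≤ ENNReal.ofReal C * fracNorm n β φ Ω u) :
    AhlforsRegular n Ω := by
  obtain ⟨A, hA, hgap⟩ := radius_gap hn hβ hφ hdbl hCβ hΩopen hI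
  obtain ⟨D, hD, hrad⟩ := radius_le_of_mass_outside hn hΩopen hA hgap
  have hn0 : (0 : ℝ) < n := by exact_mod_cast hn
  refine ⟨1 / (2 * (4 * D) ^ n), by positivity, fun x hx r hr hrd => ?_⟩
  set v := volume (ball x r ∩ Ω) with hv
  have hvfin : v ≠ ∞ := ((measure_mono inter_subset_left).trans_lt measure_ball_lt_top).ne
  -- it suffices to bound `r` by the `n`-th root of twice the measure
  suffices h : r ≤ 4 * D * (2 * v.toReal) ^ (1 / (n : ℝ)) by
    rw [← ENNReal.ofReal_toReal hvfin]
    refine ENNReal.ofReal_le_ofReal ?_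
    have h2 : r ^ n ≤ (4 * D) ^ n * (2 * v.toReal) := by
      calc r ^ n ≤ (4 * D * (2 * v.toReal) ^ (1 / (n : ℝ))) ^ n := by gcongr
        _ = _ := by
          rw [mul_pow, one_div, Real.rpow_inv_natCast_pow (by positivity) (by omega)]
    rw [one_div_mul_eq_div, div_le_iff₀ (by positivity)]
    linarith
  by_cases hcase : v ≤ 2 * volume (Ω \ ball x r)
  · have h1 := hrad x hx r hr hcase
    have h2 : v.toReal ^ (1 / (n : ℝ)) ≤ (2 * v.toReal) ^ (1 / (n : ℝ)) :=
      Real.rpow_le_rpow ENNReal.toReal_nonneg (by linarith [ENNReal.toReal_nonneg (a := v)])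
        (by positivity)
    have h3 : 0 ≤ (2 * v.toReal) ^ (1 / (n : ℝ)) := by positivity
    nlinarith
  · push Not at hcase
    -- most of the mass of `Ω` lies in the ball, so `|Ω| ≤ 2 v` is finite and bounds the diameter
    have hvol : volume Ω ≤ 2 * v := by
      rw [← measure_inter_add_sdiff Ω (measurableSet_ball (x := x) (ε := r)), inter_comm,
        two_mul]
      refine add_le_add_right (le_trans ?_ hcase.le) _
      rw [two_mul]
      exact le_self_add
    have hΩfin : volume Ω ≠ ∞ := (hvol.trans_lt (ENNReal.mul_lt_top (by simp) hvfin.lt_top)).ne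
    have hdiam : EMetric.diam Ω ≤ ENNReal.ofReal (2 * D * (volume Ω).toReal ^ (1 / (n : ℝ))) := by
      refine Metric.ediam_le fun y hy z hz => ?_
      rw [edist_dist]
      exact ENNReal.ofReal_le_ofReal (dist_le_of_finite_volume hD hrad hΩfin hy hz)
    have hlt : ENNReal.ofReal r <
        ENNReal.ofReal (2 * (2 * D * (volume Ω).toReal ^ (1 / (n : ℝ)))) := by
      refine hrd.trans_le ?_
      rw [ENNReal.ofReal_mul two_pos.le, ENNReal.ofReal_ofNat]
      gcongr
    have hlt' := (ENNReal.ofReal_lt_ofReal_iff_of_nonneg hr.le).1 hlt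
    have h4 : (volume Ω).toReal ^ (1 / (n : ℝ)) ≤ (2 * v.toReal) ^ (1 / (n : ℝ)) := by
      refine Real.rpow_le_rpow ENNReal.toReal_nonneg ?_ (by positivity)
      have := ENNReal.toReal_mono (ENNReal.mul_ne_top (by simp) hvfin) hvol
      rwa [ENNReal.toReal_mul, ENNReal.toReal_ofNat] at this
    nlinarith
end

section
/- Let n ≥ 1, β > 0, and let φ be a Young function satisfying C_β := sup_{t>0} (t^β/φ(t)) ∫_0^t φ(s) s^{-β-1} ds < ∞. Then for every domain Ω ⊂ ℝⁿ, every continuously differentiable function u with compact support contained in Ω belongs to Ẇ^{β,φ}(Ω), i.e. its fractional Orlicz–Sobolev seminorm on Ω is finite. -/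
/-!
Let `L ≥ 1` be a Lipschitz constant of `u`, and let `B > 0` bound `|u x - u y|`. Then
`|u x - u y| / L ≤ min (dist x y) B`, and the difference vanishes unless `x` or `y` lies in
`K = tsupport u`. As `φ` is nondecreasing on `[0,∞)`, the integrand of `fracIntegral` at `λ = L`
is at most `(1_K x + 1_K y) * g (x - y)`, where
`g z = φ (min ‖z‖ B) / ‖z‖ ^ (n + β)`, and Tonelli bounds the double integral by `2 |K| ∫ g`.
In polar coordinates `∫ g` is a multiple of `∫_0^∞ φ (min r B) r ^ (-β - 1) dr`; the part over
`(0, B]` is finite by the condition `C_β < ∞` at `t = B`, and the part over `(B, ∞)` is finite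
because `β > 0` (`integrable_radialKernel`).

So the double integral at `λ = L` is finite, and convexity together with `φ 0 = 0` gives
`φ (s / c) ≤ φ s / c` for `c ≥ 1`. Hence a large multiple of `L` is admissible in the seminorm.
-/

open MeasureTheory Metric Set Filter
open scoped ENNReal NNReal Topology Classical

theorem IsYoung.nonneg {φ : ℝ → ℝ} (hφ : IsYoung φ) {t : ℝ} (ht : 0 ≤ t) : 0 ≤ φ t := by
  rcases ht.eq_or_lt with rfl | h
  · exact hφ.2.2.1.ge
  · exact (hφ.2.2.2 t h).le

theorem IsYoung.map_mul_le {φ : ℝ → ℝ} (hφ : IsYoung φ) {a t : ℝ} (ha : 0 ≤ a) (ha1 : a ≤ 1)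
    (ht : 0 ≤ t) : φ (a * t) ≤ a * φ t := by
  have h := hφ.2.1.2 (show t ∈ Set.Ici (0 : ℝ) from ht) Set.self_mem_Ici
    ha (sub_nonneg.2 ha1) (by ring)
  simpa [hφ.2.2.1] using h

theorem IsYoung.mono {φ : ℝ → ℝ} (hφ : IsYoung φ) {s t : ℝ} (hs : 0 ≤ s) (hst : s ≤ t) :
    φ s ≤ φ t := by
  rcases (hs.trans hst).eq_or_lt with h | h
  · have : s = t := by linarith
    rw [this]
  · have h1 : s / t ≤ 1 := (div_le_one h).2 hst
    have h2 := hφ.map_mul_le (div_nonneg hs h.le) h1 h.le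
    rw [div_mul_cancel₀ _ h.ne'] at h2
    exact h2.trans (mul_le_of_le_one_left (hφ.nonneg h.le) h1)

theorem IsYoung.continuous_min {φ : ℝ → ℝ} (hφ : IsYoung φ) {B : ℝ} (hB : 0 < B) :
    ContinuousOn (fun r : ℝ => φ (min r B)) (Set.Ici 0) :=
  hφ.1.comp (by fun_prop) fun _ hr => le_min hr hB.le

/-- The weight `s ↦ φ s / s ^ (β + 1)` is integrable near `0`: this is all of the condition
`C_β < ∞` that is needed. -/
theorem lintegral_young_lt_top {β : ℝ} {φ : ℝ → ℝ} (hφ : IsYoung φ) (hC : CbetaFinite β φ)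
    {B : ℝ} (hB : 0 < B) :
    (∫⁻ s in Set.Ioc (0 : ℝ) B, ENNReal.ofReal (φ s / s ^ (β + 1))) < ∞ := by
  obtain ⟨M, hM⟩ := hC
  have h := (hM B hB).trans_lt ENNReal.ofReal_lt_top
  refine ENNReal.lt_top_of_mul_ne_top_right h.ne ?_
  have : 0 < B ^ β / φ B := div_pos (Real.rpow_pos_of_pos hB _) (hφ.2.2.2 B hB)
  simpa using this

theorem integrableOn_radial_profile {β : ℝ} (hβ : 0 < β) {φ : ℝ → ℝ} (hφ : IsYoung φ)
    (hC : CbetaFinite β φ) {B : ℝ} (hB : 0 < B) :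
    IntegrableOn (fun r : ℝ => φ (min r B) / r ^ (β + 1)) (Set.Ioi 0) := by
  have hcont : ContinuousOn (fun r : ℝ => φ (min r B) / r ^ (β + 1)) (Set.Ioi 0) := by
    refine ((hφ.continuous_min hB).mono Set.Ioi_subset_Ici_self).div ?_ ?_
    · exact continuousOn_id.rpow_const fun x hx => Or.inl (ne_of_gt hx)
    · exact fun x hx => (Real.rpow_pos_of_pos hx _).ne'
  rw [← Set.Ioc_union_Ioi_eq_Ioi hB.le]
  refine IntegrableOn.union ?_ ?_
  · refine ⟨(hcont.mono fun x hx => hx.1).aestronglyMeasurable measurableSet_Ioc, ?_⟩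
    rw [hasFiniteIntegral_iff_ofReal]
    · refine lt_of_eq_of_lt (setLIntegral_congr_fun measurableSet_Ioc fun r hr => ?_)
        (lintegral_young_lt_top hφ hC hB)
      simp only [min_eq_left hr.2]
    · filter_upwards [ae_restrict_mem measurableSet_Ioc] with r hr
      exact div_nonneg (hφ.nonneg (le_min hr.1.le hB.le)) (Real.rpow_nonneg hr.1.le _)
  · refine IntegrableOn.congr_fun (f := fun r : ℝ => φ B * r ^ (-(β + 1)))
      ((integrableOn_Ioi_rpow_of_lt (by linarith) hB).const_mul _) (fun r hr => ?_)
      measurableSet_Ioi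
    have hr' : B < r := hr
    simp only [min_eq_right hr'.le]
    rw [Real.rpow_neg (hB.trans hr').le, div_eq_mul_inv]

/-- The convolution kernel `g z = φ (min ‖z‖ B) / ‖z‖ ^ (n + β)` dominating the difference
quotients of a function with Lipschitz constant at most `1` and oscillation at most `B`. -/
noncomputable def radialKernel (n : ℕ) (β : ℝ) (φ : ℝ → ℝ) (B : ℝ)
    (z : EuclideanSpace ℝ (Fin n)) : ℝ :=
  φ (min ‖z‖ B) / ‖z‖ ^ ((n : ℝ) + β)

theorem measurable_radialKernel {n : ℕ} {β : ℝ} {φ : ℝ → ℝ} (hφ : IsYoung φ) {B : ℝ}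
    (hB : 0 < B) : Measurable (radialKernel n β φ B) := by
  have h : Continuous fun z : EuclideanSpace ℝ (Fin n) => φ (min ‖z‖ B) :=
    (hφ.continuous_min hB).comp_continuous continuous_norm fun z => norm_nonneg z
  exact h.measurable.div (measurable_norm.pow_const _)

theorem integrable_radialKernel {n : ℕ} (hn : 1 ≤ n) {β : ℝ} (hβ : 0 < β) {φ : ℝ → ℝ}
    (hφ : IsYoung φ) (hC : CbetaFinite β φ) {B : ℝ} (hB : 0 < B) :
    Integrable (radialKernel n β φ B) := by
  have : Nonempty (Fin n) := ⟨⟨0, hn⟩⟩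
  have h := integrable_fun_norm_addHaar (volume : Measure (EuclideanSpace ℝ (Fin n)))
    (f := fun r : ℝ => φ (min r B) / r ^ ((n : ℝ) + β))
  refine h.2 ((integrableOn_radial_profile hβ hφ hC hB).congr_fun (fun r hr => ?_)
    measurableSet_Ioi)
  have hr' : (0 : ℝ) < r := hr
  have hpow : r ^ ((n : ℝ) + β) = r ^ (n - 1) * r ^ (β + 1) := by
    rw [← Real.rpow_natCast r (n - 1), ← Real.rpow_add hr']
    congr 1
    push_cast [Nat.cast_sub hn]
    ring
  have h1 : r ^ (n - 1) ≠ 0 := (pow_pos hr' _).ne'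
  simp only [finrank_euclideanSpace, Fintype.card_fin, smul_eq_mul]
  rw [hpow]
  field_simp

/-- Tonelli for a difference kernel localised to `x ∈ K` or `y ∈ K`, with `K` of finite measure. -/
theorem lintegral_localised_kernel_lt_top {n : ℕ} {K : Set (EuclideanSpace ℝ (Fin n))}
    (hK : MeasurableSet K) (hKfin : volume K < ∞) {G : EuclideanSpace ℝ (Fin n) → ℝ≥0∞}
    (hG : Measurable G) (hGfin : (∫⁻ z, G z) < ∞) :
    (∫⁻ x, ∫⁻ y, (K.indicator 1 x * G (x - y) + K.indicator 1 y * G (x - y))) < ∞ := by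
  have hK1 : Measurable (K.indicator (1 : EuclideanSpace ℝ (Fin n) → ℝ≥0∞)) :=
    measurable_one.indicator hK
  have hint : (∫⁻ x, K.indicator (1 : EuclideanSpace ℝ (Fin n) → ℝ≥0∞) x) = volume K :=
    lintegral_indicator_one hK
  have hleft : (∫⁻ x, ∫⁻ y, K.indicator 1 x * G (x - y)) = volume K * ∫⁻ z, G z := by
    have : ∀ x, (∫⁻ y, K.indicator 1 x * G (x - y)) = K.indicator 1 x * ∫⁻ z, G z := by
      intro x
      rw [lintegral_const_mul _ (by fun_prop), lintegral_sub_left_eq_self G x]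
    simp only [this]
    rw [lintegral_mul_const _ hK1, hint]
  have hright : (∫⁻ x, ∫⁻ y, K.indicator 1 y * G (x - y)) = volume K * ∫⁻ z, G z := by
    rw [lintegral_lintegral_swap (by fun_prop)]
    have : ∀ y, (∫⁻ x, K.indicator 1 y * G (x - y)) = K.indicator 1 y * ∫⁻ z, G z := by
      intro y
      rw [lintegral_const_mul _ (by fun_prop), lintegral_sub_right_eq_self G y]
    simp only [this]
    rw [lintegral_mul_const _ hK1, hint]
  have hsplit : (∫⁻ x, ∫⁻ y, (K.indicator 1 x * G (x - y) + K.indicator 1 y * G (x - y)))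
      = volume K * (∫⁻ z, G z) + volume K * ∫⁻ z, G z := by
    calc _ = ∫⁻ x, ((∫⁻ y, K.indicator 1 x * G (x - y)) + ∫⁻ y, K.indicator 1 y * G (x - y)) :=
          lintegral_congr fun x => lintegral_add_left (by fun_prop) _
      _ = _ := by
          rw [lintegral_add_left (Measurable.lintegral_prod_right'
            (f := fun p => K.indicator 1 p.1 * G (p.1 - p.2)) (by fun_prop)), hleft, hright]
  rw [hsplit]
  exact ENNReal.add_lt_top.2 ⟨ENNReal.mul_lt_top hKfin hGfin, ENNReal.mul_lt_top hKfin hGfin⟩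

/-- At `λ = L`, where `u / L` has Lipschitz constant at most `1` and oscillation at most `B`, the
integrand is dominated by `radialKernel` localised to `x ∈ tsupport u` or `y ∈ tsupport u`. -/
theorem fracIntegral_lt_top {n : ℕ} (hn : 1 ≤ n) {β : ℝ} (hβ : 0 < β) {φ : ℝ → ℝ}
    (hφ : IsYoung φ) (hC : CbetaFinite β φ) (Ω : Set (EuclideanSpace ℝ (Fin n)))
    {u : EuclideanSpace ℝ (Fin n) → ℝ} (hsupp : HasCompactSupport u) {L B : ℝ} (hL : 0 < L)
    (hB : 0 < B) (hlip : ∀ x y, |u x - u y| / L ≤ dist x y)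
    (hbd : ∀ x y, |u x - u y| / L ≤ B) : fracIntegral n β φ Ω u L < ∞ := by
  have hG : Measurable fun z => ENNReal.ofReal (radialKernel n β φ B z) :=
    (measurable_radialKernel hφ hB).ennreal_ofReal
  have hGfin : (∫⁻ z, ENNReal.ofReal (radialKernel n β φ B z)) < ∞ :=
    (integrable_radialKernel hn hβ hφ hC hB).lintegral_lt_top
  refine lt_of_le_of_lt ?_ (lintegral_localised_kernel_lt_top (isClosed_tsupport u).measurableSet
    hsupp.isCompact.measure_lt_top hG hGfin)
  refine (setLIntegral_le_lintegral _ _).trans (lintegral_mono fun x => ?_)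
  refine (setLIntegral_le_lintegral _ _).trans (lintegral_mono fun y => ?_)
  have hdom : ENNReal.ofReal (φ (|u x - u y| / L) / dist x y ^ ((n : ℝ) + β))
      ≤ ENNReal.ofReal (radialKernel n β φ B (x - y)) := by
    refine ENNReal.ofReal_le_ofReal ?_
    rw [radialKernel, ← dist_eq_norm]
    exact div_le_div_of_nonneg_right
      (hφ.mono (by positivity) (le_min (hlip x y) (hbd x y))) (by positivity)
  by_cases hx : x ∈ tsupport u
  · simpa [hx] using hdom.trans le_self_add
  by_cases hy : y ∈ tsupport u
  · simpa [hx, hy] using hdom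
  · simp [image_eq_zero_of_notMem_tsupport hx, image_eq_zero_of_notMem_tsupport hy, hφ.2.2.1]

theorem fracIntegral_mul_le {n : ℕ} {β : ℝ} {φ : ℝ → ℝ} (hφ : IsYoung φ)
    (Ω : Set (EuclideanSpace ℝ (Fin n))) (u : EuclideanSpace ℝ (Fin n) → ℝ) {L c : ℝ}
    (hL : 0 < L) (hc : 1 ≤ c) :
    fracIntegral n β φ Ω u (c * L) ≤ ENNReal.ofReal c⁻¹ * fracIntegral n β φ Ω u L := by
  have hc0 : 0 < c := by linarith
  unfold fracIntegral
  rw [← lintegral_const_mul' _ _ ENNReal.ofReal_ne_top]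
  refine lintegral_mono fun x => ?_
  rw [← lintegral_const_mul' _ _ ENNReal.ofReal_ne_top]
  refine lintegral_mono fun y => ?_
  rw [← ENNReal.ofReal_mul (by positivity), ← mul_div_assoc]
  refine ENNReal.ofReal_le_ofReal (div_le_div_of_nonneg_right ?_ (by positivity))
  have h := hφ.map_mul_le (a := c⁻¹) (t := |u x - u y| / L) (by positivity)
    (inv_le_one_of_one_le₀ hc) (by positivity)
  have heq : |u x - u y| / (c * L) = c⁻¹ * (|u x - u y| / L) := by field_simp
  rw [heq]
  exact h

/-- `C¹` functions with compact support in `Ω` belong to `Ẇ^{β,φ}(Ω)`. -/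
theorem smooth_compactly_supported_mem
    (n : ℕ) (hn : 1 ≤ n) (β : ℝ) (hβ : 0 < β)
    (φ : ℝ → ℝ) (hφ : IsYoung φ) (hCβ : CbetaFinite β φ)
    (Ω : Set (EuclideanSpace ℝ (Fin n))) (hΩopen : IsOpen Ω) (hΩconn : IsConnected Ω)
    (u : EuclideanSpace ℝ (Fin n) → ℝ) (hu : ContDiff ℝ 1 u)
    (hsupp : HasCompactSupport u) (hsub : tsupport u ⊆ Ω) :
    MemW n β φ Ω u := by
  refine ⟨(hu.continuous.locallyIntegrable).locallyIntegrableOn Ω, ?_⟩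
  obtain ⟨C, hC⟩ := hu.lipschitzWith_of_hasCompactSupport hsupp one_ne_zero
  obtain ⟨A, hA⟩ := hsupp.exists_bound_of_continuous hu.continuous
  have hA0 : 0 ≤ A := (norm_nonneg _).trans (hA 0)
  set L : ℝ := C + 1 with hLdef
  have hL : 0 < L := by positivity
  have hL1 : 1 ≤ L := le_add_of_nonneg_left C.2
  have hfin : fracIntegral n β φ Ω u L < ∞ := by
    refine fracIntegral_lt_top hn hβ hφ hCβ Ω hsupp hL (B := 2 * A + 1) (by positivity) ?_ ?_
    · intro x y
      rw [div_le_iff₀ hL, mul_comm, ← Real.dist_eq]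
      exact (hC.dist_le_mul x y).trans
        (mul_le_mul_of_nonneg_right (by simp [hLdef]) dist_nonneg)
    · intro x y
      refine (div_le_self (abs_nonneg _) hL1).trans ?_
      have h := abs_sub (u x) (u y)
      have hx := hA x
      have hy := hA y
      rw [Real.norm_eq_abs] at hx hy
      linarith
  set I := fracIntegral n β φ Ω u L with hI
  -- Any `c ≥ max 1 I` makes `c * L` admissible.
  set c : ℝ := I.toReal + 1 with hcdef
  have hc1 : 1 ≤ c := le_add_of_nonneg_left ENNReal.toReal_nonneg
  have hc0 : 0 < c := by linarith
  have hle : fracIntegral n β φ Ω u (c * L) ≤ 1 := by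
    refine (fracIntegral_mul_le hφ Ω u hL hc1).trans ?_
    rw [← hI, ← ENNReal.ofReal_toReal hfin.ne, ← ENNReal.ofReal_mul (by positivity),
      ENNReal.ofReal_le_one, inv_mul_le_iff₀ hc0]
    linarith
  refine ne_top_of_le_ne_top (ENNReal.ofReal_ne_top (r := c * L)) (sInf_le ⟨?_, ?_, ?_⟩)
  · exact ENNReal.ofReal_pos.2 (by positivity)
  · exact ENNReal.ofReal_ne_top
  · rwa [ENNReal.toReal_ofReal (by positivity)]
end

section
/- Let n ≥ 1 and β ∈ (0,n). Then there exists a constant C(n,β) > 0, depending only on n and β, such that for every ball B ⊂ ℝⁿ, every x ∈ B, and every measurable set E ⊂ B with 0 < |E| < |B|/2, one has ∫_{B∖E} |x−y|^{−n−β} dy ≥ C(n,β) |E|^{−β/n}. -/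
/-!
Write `m = |E|` and let `ω` be the volume of the unit ball. Choose `s` with `ω sⁿ = 2m`; the
hypothesis `2m < |B|` says exactly that `s < r`. Moving from `x` towards the centre of `B` by the
fraction `s / r` gives a centre `w` whose ball `B(w, s)` lies both in `B` and in `B(x, 2s)`
(`exists_ball_subset`). Since `|B(w, s)| = 2m`, the set `B(w, s) ∖ E` has measure at least `m`, and
on it the kernel is at least `(2s)^{-n-β}`. Hence the integral is at least `m (2s)^{-n-β}`, which
is a constant times `m^{-β/n}` because `s` is a constant times `m^{1/n}`.
-/

open MeasureTheory Metric Set Filter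
open scoped ENNReal NNReal Topology Classical

/-- A ball of radius `r` satisfies an interior corkscrew condition at each of its points: near any
`x` in it, at every scale `s ≤ r`, it contains a full ball of radius `s`. -/
lemma exists_ball_subset {F : Type*} [NormedAddCommGroup F] [NormedSpace ℝ F]
    {z x : F} {r s : ℝ} (hr : 0 < r) (hs : 0 < s) (hsr : s ≤ r) (hx : x ∈ Metric.ball z r) :
    ∃ w : F, Metric.ball w s ⊆ Metric.ball z r ∧ Metric.ball w s ⊆ Metric.ball x (2 * s) := by
  have ht0 : 0 < s / r := div_pos hs hr
  have ht1 : s / r ≤ 1 := (div_le_one hr).2 hsr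
  have htr : s / r * r = s := div_mul_cancel₀ s hr.ne'
  have hd : dist x z < r := hx
  refine ⟨AffineMap.lineMap x z (s / r), Metric.ball_subset_ball' ?_, Metric.ball_subset_ball' ?_⟩
  · rw [dist_lineMap_right, Real.norm_of_nonneg (by linarith)]
    nlinarith
  · rw [dist_lineMap_left, Real.norm_of_nonneg ht0.le]
    nlinarith

/-- geometric inequality: `∫_{B∖E} |x-y|^{-n-β} dy ≥ C(n,β) |E|^{-β/n}`
whenever `E ⊆ B` with `0 < |E| < |B|/2`. -/
theorem geometric_inequality
    (n : ℕ) (hn : 1 ≤ n) (β : ℝ) (hβ : β ∈ Set.Ioo (0 : ℝ) (n : ℝ)) :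
    ∃ C > (0 : ℝ), ∀ (z : EuclideanSpace ℝ (Fin n)) (r : ℝ), 0 < r →
      ∀ x ∈ Metric.ball z r, ∀ E ⊆ Metric.ball z r, MeasurableSet E →
        0 < volume E → 2 * volume E < volume (Metric.ball z r) →
          ENNReal.ofReal (C * (volume E).toReal ^ (-(β / (n : ℝ)))) ≤
            ∫⁻ y in Metric.ball z r \ E,
              ENNReal.ofReal (1 / dist x y ^ ((n : ℝ) + β)) := by
  have hn0 : (0 : ℝ) < n := by exact_mod_cast hn
  have hβ0 : 0 < β := hβ.1
  have : Nonempty (Fin n) := ⟨⟨0, hn⟩⟩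
  set ω : ℝ := (volume (Metric.ball (0 : EuclideanSpace ℝ (Fin n)) 1)).toReal with hω
  have hω0 : 0 < ω := ENNReal.toReal_pos (measure_ball_pos _ _ one_pos).ne' measure_ball_lt_top.ne
  have hvol : ∀ (w : EuclideanSpace ℝ (Fin n)) (s : ℝ), 0 ≤ s →
      volume (Metric.ball w s) = ENNReal.ofReal (s ^ n * ω) := by
    intro w s hs
    rw [Measure.addHaar_ball volume w hs, finrank_euclideanSpace_fin,
      ENNReal.ofReal_mul (by positivity), hω, ENNReal.ofReal_toReal measure_ball_lt_top.ne]
  refine ⟨(2 : ℝ) ^ (-((n : ℝ) + β)) * (2 / ω) ^ (-(1 + β / n)), by positivity, ?_⟩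
  intro z r hr x hx E hEB hE hE0 hE2
  have hEtop : volume E ≠ ∞ := ((measure_mono hEB).trans_lt measure_ball_lt_top).ne
  set m : ℝ := (volume E).toReal with hm
  have hm0 : 0 < m := ENNReal.toReal_pos hE0.ne' hEtop
  have hEm : volume E = ENNReal.ofReal m := (ENNReal.ofReal_toReal hEtop).symm
  have hmr : 2 * m < r ^ n * ω := by
    rw [hvol z r hr.le, hEm, ← ENNReal.ofReal_ofNat, ← ENNReal.ofReal_mul (by norm_num)] at hE2
    exact (ENNReal.ofReal_lt_ofReal_iff (by positivity)).1 hE2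
  obtain ⟨s, hsdef⟩ : ∃ s : ℝ, s = (2 / ω * m) ^ (1 / (n : ℝ)) := ⟨_, rfl⟩
  have hs0 : 0 < s := by rw [hsdef]; positivity
  have hsn : s ^ n = 2 / ω * m := by
    rw [hsdef, one_div, Real.rpow_inv_natCast_pow (by positivity) (by omega)]
  have hsω : s ^ n * ω = 2 * m := by rw [hsn]; field_simp
  have hsr : s < r := by
    refine lt_of_pow_lt_pow_left₀ n hr.le ?_
    rw [← hsω] at hmr
    exact lt_of_mul_lt_mul_right hmr hω0.le
  obtain ⟨w, hwz, hwx⟩ := exists_ball_subset hr hs0 hsr.le hx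
  -- The point `x` is removed because the kernel takes the junk value `1 / 0 = 0` there.
  have hmeas : ENNReal.ofReal m ≤ volume ((Metric.ball w s \ E) \ {x}) := by
    rw [measure_sdiff_null (measure_singleton x)]
    refine le_trans ?_ (le_measure_sdiff (μ := volume) (s₁ := Metric.ball w s) (s₂ := E))
    rw [hvol w s hs0.le, hsω, hEm, ← ENNReal.ofReal_sub _ hm0.le]
    apply ENNReal.ofReal_le_ofReal
    linarith
  have hconst : (2 : ℝ) ^ (-((n : ℝ) + β)) * (2 / ω) ^ (-(1 + β / n)) * m ^ (-(β / (n : ℝ)))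
      = 1 / (2 * s) ^ ((n : ℝ) + β) * m := by
    have h1 : s ^ (-((n : ℝ) + β)) = (2 / ω) ^ (-(1 + β / n)) * m ^ (-(1 + β / n)) := by
      rw [hsdef, ← Real.rpow_mul (by positivity), ← Real.mul_rpow (by positivity) hm0.le]
      congr 1
      field_simp
    have h2 : m ^ (-(β / (n : ℝ))) = m ^ (-(1 + β / n)) * m := by
      rw [← Real.rpow_add_one hm0.ne']
      congr 1
      ring
    rw [one_div, ← Real.rpow_neg (by positivity), Real.mul_rpow (by norm_num) hs0.le, h1, h2]
    ring
  calc ENNReal.ofReal _ = ENNReal.ofReal (1 / (2 * s) ^ ((n : ℝ) + β)) * ENNReal.ofReal m := by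
        rw [hconst, ENNReal.ofReal_mul (by positivity)]
    _ ≤ ENNReal.ofReal (1 / (2 * s) ^ ((n : ℝ) + β)) *
          volume ((Metric.ball w s \ E) \ {x}) := by gcongr
    _ = ∫⁻ _ in (Metric.ball w s \ E) \ {x},
          ENNReal.ofReal (1 / (2 * s) ^ ((n : ℝ) + β)) := by rw [setLIntegral_const]
    _ ≤ ∫⁻ y in (Metric.ball w s \ E) \ {x}, ENNReal.ofReal (1 / dist x y ^ ((n : ℝ) + β)) := by
        refine setLIntegral_mono' ((measurableSet_ball.diff hE).diff (measurableSet_singleton x)) ?_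
        intro y hy
        have hpos : 0 < dist x y := dist_pos.2 fun h => hy.2 h.symm
        have hle : dist x y ≤ 2 * s := by
          rw [dist_comm]
          exact (Metric.mem_ball.1 (hwx hy.1.1)).le
        gcongr
    _ ≤ _ := lintegral_mono_set (diff_subset.trans (diff_subset_diff_left hwz))
end

section
/- Let n ≥ 1, β ∈ (0,n), λ > 0, and let φ be a Young function. Let (a_i)_{i∈ℤ} be a nonincreasing sequence of nonnegative reals with a_i = 0 for all sufficiently large i, and set d_i := a_i − a_{i+1} ≥ 0. Then Σ_{i∈ℤ, a_{i−1} ≠ 0} φ(2^{i−1}/λ) a_{i−1}^{−β/n} a_i ≤ 2 Σ_{i∈ℤ, a_{i−1} ≠ 0} φ(2^{i−1}/λ) a_{i−1}^{−β/n} d_i (the sums taken with values in [0,∞]). -/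
/-!
Write `w i = φ (2^(i-1)/λ) * a (i-1) ^ (-β/n)` for the weight, so that
`w i * a i = w i * d i + w i * a (i+1)`. Convexity of `φ` gives `2 φ(t) ≤ φ(2t)`, and `a` is
nonincreasing while the exponent is negative, so `2 * w i ≤ w (i+1)` as long as `a i ≠ 0`
(when `a i = 0`, also `a (i+1) = 0`). Thus `f i = w i * a i` and `g i = w i * d i` satisfy
`2 f i ≤ 2 g i + f (i+1)`. Since `f` vanishes for large indices, `tsum_le_two_mul_tsum_of_step`
sums this inequality downwards; no finiteness of the total sums is needed.
-/

open MeasureTheory Metric Set Filter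
open scoped ENNReal NNReal Topology Classical

/-- Telescoping in `[0,∞]`. The extra term `f (N - k)` makes the partial-sum estimate inductive
without any subtraction, so infinite sums need no separate treatment. -/
lemma tsum_le_two_mul_tsum_of_step (f g : ℤ → ℝ≥0∞) (N : ℤ) (hN : ∀ i ≥ N, f i = 0)
    (h : ∀ i, 2 * f i ≤ 2 * g i + f (i + 1)) :
    ∑' i, f i ≤ 2 * ∑' i, g i := by
  have key : ∀ k : ℕ, ∑ j ∈ Finset.range k, f (N - 1 - j) + f (N - k) ≤
      2 * ∑ j ∈ Finset.range k, g (N - 1 - j) := by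
    intro k
    induction k with
    | zero => simp [hN N le_rfl]
    | succ k ih =>
      rw [Finset.sum_range_succ, Finset.sum_range_succ]
      have e1 : N - ((k + 1 : ℕ) : ℤ) = N - 1 - k := by push_cast; ring
      have hk := h (N - 1 - k)
      have e2 : N - 1 - (k : ℤ) + 1 = N - k := by ring
      rw [e2] at hk
      rw [e1]
      calc _ = ∑ j ∈ Finset.range k, f (N - 1 - j) + 2 * f (N - 1 - k) := by ring
        _ ≤ ∑ j ∈ Finset.range k, f (N - 1 - j) + (2 * g (N - 1 - k) + f (N - k)) := by gcongr
        _ = (∑ j ∈ Finset.range k, f (N - 1 - j) + f (N - k)) + 2 * g (N - 1 - k) := by ring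
        _ ≤ 2 * ∑ j ∈ Finset.range k, g (N - 1 - j) + 2 * g (N - 1 - k) := by gcongr
        _ = _ := by ring
  have hinj : Function.Injective (fun j : ℕ => N - 1 - (j : ℤ)) := by
    intro x y hxy
    simp only at hxy
    omega
  have hsupp : Function.support f ⊆ Set.range (fun j : ℕ => N - 1 - (j : ℤ)) := by
    intro i hi
    have hlt : i < N := by
      by_contra hc
      exact hi (hN i (not_lt.mp hc))
    exact ⟨(N - 1 - i).toNat, by simp only; omega⟩
  rw [← hinj.tsum_eq hsupp, ENNReal.tsum_eq_iSup_nat]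
  refine iSup_le fun k => ?_
  calc _ ≤ ∑ j ∈ Finset.range k, f (N - 1 - j) + f (N - k) := le_self_add
    _ ≤ 2 * ∑ j ∈ Finset.range k, g (N - 1 - j) := key k
    _ ≤ 2 * ∑' j : ℕ, g (N - 1 - j) := by gcongr; exact ENNReal.sum_le_tsum _
    _ ≤ 2 * ∑' i, g i := by
      gcongr
      exact ENNReal.tsum_comp_le_tsum_of_injective hinj g

lemma IsYoung.two_mul_le {φ : ℝ → ℝ} (hφ : IsYoung φ) {t : ℝ} (ht : 0 ≤ t) :
    2 * φ t ≤ φ (2 * t) := by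
  obtain ⟨-, hc, h0, -⟩ := hφ
  have m0 : (0 : ℝ) ∈ Set.Ici (0 : ℝ) := Set.mem_Ici.mpr le_rfl
  have m1 : 2 * t ∈ Set.Ici (0 : ℝ) := Set.mem_Ici.mpr (by positivity)
  have h := hc.2 m0 m1 (show (0 : ℝ) ≤ 1 / 2 by norm_num) (show (0 : ℝ) ≤ 1 / 2 by norm_num)
    (by norm_num)
  simp only [smul_eq_mul, h0, mul_zero, zero_add] at h
  rw [show (1 / 2 : ℝ) * (2 * t) = t by ring] at h
  linarith

/-- discrete summation lemma:
`Σ φ(2^{i-1}/λ) a_{i-1}^{-β/n} a_i ≤ 2 Σ φ(2^{i-1}/λ) a_{i-1}^{-β/n} d_i`. -/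
theorem discrete_sum_lemma
    (n : ℕ) (hn : 1 ≤ n) (β : ℝ) (hβ : β ∈ Set.Ioo (0 : ℝ) (n : ℝ))
    (lam : ℝ) (hlam : 0 < lam)
    (φ : ℝ → ℝ) (hφ : IsYoung φ)
    (a : ℤ → ℝ) (ha0 : ∀ i, 0 ≤ a i) (hmono : Antitone a)
    (hvanish : ∃ N : ℤ, ∀ i ≥ N, a i = 0) :
    (∑' i : ℤ, Set.indicator {i : ℤ | a (i - 1) ≠ 0}
        (fun i => ENNReal.ofReal
          (φ ((2 : ℝ) ^ (i - 1) / lam) * a (i - 1) ^ (-(β / (n : ℝ))) * a i)) i) ≤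
      2 * ∑' i : ℤ, Set.indicator {i : ℤ | a (i - 1) ≠ 0}
        (fun i => ENNReal.ofReal
          (φ ((2 : ℝ) ^ (i - 1) / lam) * a (i - 1) ^ (-(β / (n : ℝ))) *
            (a i - a (i + 1)))) i := by
  obtain ⟨N, hN⟩ := hvanish
  apply tsum_le_two_mul_tsum_of_step _ _ N
  · intro i hi
    simp [Set.indicator, hN i hi]
  intro i
  by_cases h1 : a (i - 1) = 0
  · simp [Set.indicator, h1]
  have p1 : 0 < a (i - 1) := lt_of_le_of_ne (ha0 _) (Ne.symm h1)
  by_cases h2 : a i = 0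
  · simp [Set.indicator, h2]
  have p2 : 0 < a i := lt_of_le_of_ne (ha0 _) (Ne.symm h2)
  have t0 : 0 < (2 : ℝ) ^ (i - 1) / lam := by positivity
  have hφ2 : 2 * φ ((2 : ℝ) ^ (i - 1) / lam) ≤ φ ((2 : ℝ) ^ i / lam) := by
    have h := hφ.two_mul_le t0.le
    have e : (2 : ℝ) * (2 ^ (i - 1) / lam) = 2 ^ i / lam := by
      rw [zpow_sub_one₀ (by norm_num)]; ring
    rwa [e] at h
  have hφp := hφ.2.2.2 _ t0
  have hpow : a (i - 1) ^ (-(β / (n : ℝ))) ≤ a i ^ (-(β / (n : ℝ))) := by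
    apply Real.rpow_le_rpow_of_nonpos p2 (hmono (by omega))
    have := div_nonneg hβ.1.le (Nat.cast_nonneg (α := ℝ) n)
    linarith
  have q1 : 0 < a (i - 1) ^ (-(β / (n : ℝ))) := Real.rpow_pos_of_pos p1 _
  have hd : 0 ≤ a i - a (i + 1) := sub_nonneg.mpr (hmono (by omega))
  have hn1 := ha0 (i + 1)
  have hw : 2 * φ ((2 : ℝ) ^ (i - 1) / lam) * a (i - 1) ^ (-(β / (n : ℝ))) * a (i + 1) ≤
      φ ((2 : ℝ) ^ i / lam) * a i ^ (-(β / (n : ℝ))) * a (i + 1) := by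
    gcongr
    linarith
  simp only [Set.indicator, Set.mem_ofPred_eq, add_sub_cancel_right, ne_eq, h1, h2,
    not_false_eq_true, if_true]
  rw [← ENNReal.ofReal_ofNat 2, ← ENNReal.ofReal_mul (by norm_num),
    ← ENNReal.ofReal_mul (by norm_num), ← ENNReal.ofReal_add (by positivity)
      (le_trans (by positivity) hw)]
  apply ENNReal.ofReal_le_ofReal
  linarith
end
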